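/- arXiv:math/0009163 — 4 statements merged into one kernel-verified Lean document; each statement's English description precedes it below -/
import Mathlib

section
/- Let F be an algebraically closed field and let L ⊆ Mat_n(F) be a linear subspace with dim L ≥ n such that L is not contained in sl_n (i.e., L contains a matrix with nonzero trace). Then there exists an invertible matrix S ∈ GL_n(F) such that π(S L S⁻¹) = Fⁿ, where π : Mat_n(F) → Fⁿ is the projection M ↦ (m₁₁, m₂₂, …, m_nn) onto the diagonal entries. -/
open Matrix

section Perturbation

open Polynomial

variable {F E U : Type*} [Field F] [AddCommGroup E] [Module F E] [AddCommGroup U] [Module F U]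

/-- A quadratic perturbation of a linearly independent family stays linearly independent away
from the zeros of a nonzero polynomial in the parameter. -/
theorem LinearIndependent.exists_polynomial_quadratic_perturbation {ι : Type*} [Fintype ι]
    [DecidableEq ι] {u₀ : ι → U} (h : LinearIndependent F u₀) (u₁ u₂ : ι → U) :
    ∃ p : F[X], p ≠ 0 ∧ ∀ t : F, p.eval t ≠ 0 →
      LinearIndependent F (fun i => u₀ i + t • u₁ i + t ^ 2 • u₂ i) := by
  obtain ⟨g, hg⟩ := (Fintype.linearCombination F u₀).exists_leftInverse_of_injective
    (LinearMap.ker_eq_bot.2 (linearIndependent_iff_injective_fintypeLinearCombination.1 h))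
  have hgu : ∀ i, g (u₀ i) = Pi.single i 1 := fun i => by
    have := LinearMap.congr_fun hg (Pi.single i 1)
    simpa [Fintype.linearCombination_apply_single] using this
  let G : Matrix ι ι F[X] := Matrix.of fun i j =>
    C (g (u₀ i) j) + X * C (g (u₁ i) j) + X ^ 2 * C (g (u₂ i) j)
  have hG : ∀ t, G.det.eval t =
      (Matrix.of fun i j => g (u₀ i + t • u₁ i + t ^ 2 • u₂ i) j).det := fun t => by
    rw [← coe_evalRingHom, RingHom.map_det]
    congr 1
    ext i j
    simp [G]
    ring
  refine ⟨G.det, fun h0 => ?_, fun t ht => ?_⟩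
  · have h1 := hG 0
    have : (Matrix.of fun i j => g (u₀ i + (0 : F) • u₁ i + (0 : F) ^ 2 • u₂ i) j) = 1 := by
      ext i j
      simp [hgu, Matrix.one_apply, Pi.single_apply, eq_comm]
    rw [this, h0] at h1
    simp at h1
  · rw [hG] at ht
    refine LinearIndependent.of_comp g ?_
    exact Matrix.linearIndependent_rows_of_det_ne_zero ht

/-- If `A₁` maps a vector of the kernel of `A₀` outside the range of `A₀`, then the rank of
`A₀ + t A₁ + t² A₂` exceeds that of `A₀` for generic `t`. -/
theorem LinearMap.exists_polynomial_finrank_range_lt [FiniteDimensional F U]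
    (A₀ A₁ A₂ : E →ₗ[F] U) {x : E} (hx : A₀ x = 0) (hx₁ : A₁ x ∉ LinearMap.range A₀) :
    ∃ p : F[X], p ≠ 0 ∧ ∀ t : F, p.eval t ≠ 0 →
      Module.finrank F (LinearMap.range A₀) <
        Module.finrank F (LinearMap.range (A₀ + t • A₁ + t ^ 2 • A₂)) := by
  set r := Module.finrank F (LinearMap.range A₀)
  let b := Module.finBasis F (LinearMap.range A₀)
  choose y hy using fun i => (b i).2
  have hli : LinearIndependent F
      (Fin.cons (A₁ x) (fun i => A₀ (y i)) : Fin (r + 1) → U) := by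
    refine linearIndependent_finCons.2 ⟨?_, fun hmem => hx₁ ?_⟩
    · simp only [hy]
      exact b.linearIndependent.map' _ (Submodule.ker_subtype _)
    · refine Submodule.span_le.2 ?_ hmem
      rintro _ ⟨i, rfl⟩
      exact ⟨y i, rfl⟩
  obtain ⟨p, hp, hpt⟩ := hli.exists_polynomial_quadratic_perturbation
    (Fin.cons (A₂ x) (fun i => A₁ (y i))) (Fin.cons 0 (fun i => A₂ (y i)))
  refine ⟨p * X, mul_ne_zero hp X_ne_zero, fun t ht => ?_⟩
  simp only [eval_mul, eval_X, mul_ne_zero_iff] at ht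
  have hli' := hpt t ht.1
  have hmem : ∀ i, (Fin.cons (A₁ x) (fun i => A₀ (y i)) : Fin (r + 1) → U) i +
      t • (Fin.cons (A₂ x) (fun i => A₁ (y i)) : Fin (r + 1) → U) i +
      t ^ 2 • (Fin.cons 0 (fun i => A₂ (y i)) : Fin (r + 1) → U) i ∈
        LinearMap.range (A₀ + t • A₁ + t ^ 2 • A₂) := by
    refine Fin.cases ⟨t⁻¹ • x, ?_⟩ (fun j => ⟨y j, ?_⟩)
    · simp [hx, smul_smul, ht.2, pow_two]
    · simp
  have hle := Submodule.finrank_mono (R := F) (Submodule.span_le.2 (Set.range_subset_iff.2 hmem))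
  rw [finrank_span_eq_card hli', Fintype.card_fin] at hle
  omega

end Perturbation

namespace Matrix

variable {F : Type*} [Field F]

/-- Conjugation by an invertible matrix, as a linear map. -/
def conjLinear {ι : Type*} [Fintype ι] [DecidableEq ι] (S : (Matrix ι ι F)ˣ) :
    Matrix ι ι F →ₗ[F] Matrix ι ι F :=
  LinearMap.mulLeftRight F ((S : Matrix ι ι F), ((S⁻¹ : (Matrix ι ι F)ˣ) : Matrix ι ι F))

section Conj

variable {ι : Type*} [Fintype ι] [DecidableEq ι]

theorem conjLinear_apply (S : (Matrix ι ι F)ˣ) (A : Matrix ι ι F) :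
    conjLinear S A = S * A * ((S⁻¹ : (Matrix ι ι F)ˣ) : Matrix ι ι F) := rfl

theorem conjLinear_mul_apply (S T : (Matrix ι ι F)ˣ) (A : Matrix ι ι F) :
    conjLinear (S * T) A = conjLinear S (conjLinear T A) := by
  simp [conjLinear_apply, mul_assoc]

theorem conjLinear_injective (S : (Matrix ι ι F)ˣ) :
    Function.Injective (conjLinear (F := F) S) := fun A B h => by
  exact S.isUnit.mul_left_cancel (S⁻¹.isUnit.mul_right_cancel h)

/-- The invertible matrix `1 + N`, for `N` of square zero. -/
def unipotent (N : Matrix ι ι F) (hN : N * N = 0) : (Matrix ι ι F)ˣ where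
  val := 1 + N
  inv := 1 - N
  val_inv := by simp [mul_sub, add_mul, hN]
  inv_val := by simp [mul_add, sub_mul, hN]

theorem conjLinear_unipotent_apply (N : Matrix ι ι F) (hN : N * N = 0) (A : Matrix ι ι F) :
    conjLinear (unipotent N hN) A = A + (N * A - A * N) - N * A * N := by
  change (1 + N) * A * (1 - N) = _
  noncomm_ring

/-- A nonzero matrix has a conjugate with nonzero entry at any prescribed diagonal place. -/
theorem exists_conjLinear_diag_ne_zero {A : Matrix ι ι F} (hA : A ≠ 0) (k : ι) :
    ∃ S : (Matrix ι ι F)ˣ, conjLinear S A k k ≠ 0 := by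
  suffices h : ∃ (S : (Matrix ι ι F)ˣ) (i : ι), conjLinear S A i i ≠ 0 by
    obtain ⟨S, i, hi⟩ := h
    let e := Equiv.swap k i
    let P : (Matrix ι ι F)ˣ :=
      ⟨(1 : Matrix ι ι F).submatrix e id, (1 : Matrix ι ι F).submatrix id e,
        by ext; simp [Matrix.mul_apply, Matrix.one_apply],
        by rw [submatrix_mul_equiv _ _ id e id]; simp⟩
    refine ⟨P * S, ?_⟩
    rw [conjLinear_mul_apply, conjLinear_apply]
    change ((1 : Matrix ι ι F).submatrix e id * conjLinear S A *
      (1 : Matrix ι ι F).submatrix id e) k k ≠ 0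
    simpa [Matrix.mul_apply, Matrix.one_apply, e] using hi
  by_cases hd : ∃ i, A i i ≠ 0
  · obtain ⟨i, hi⟩ := hd
    exact ⟨1, i, by simpa [conjLinear_apply] using hi⟩
  push Not at hd
  obtain ⟨i, j, hij⟩ : ∃ i j, A i j ≠ 0 := by
    by_contra! h
    exact hA (Matrix.ext h)
  have hne : i ≠ j := fun h => hij (h ▸ hd i)
  refine ⟨unipotent (single j i 1) (by simp [hne]), i, ?_⟩
  rw [conjLinear_unipotent_apply]
  simp [hd, hne, Matrix.mul_assoc, hij]

end Conj

section Peel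

variable {n : ℕ}

/-- The diagonal part of a matrix with respect to the block decomposition `1 + n`. -/
def blockDiagPart : Matrix (Fin (n + 1)) (Fin (n + 1)) F →ₗ[F] F × Matrix (Fin n) (Fin n) F where
  toFun A := (A 0 0, A.submatrix Fin.succ Fin.succ)
  map_add' _ _ := rfl
  map_smul' _ _ := rfl

theorem blockDiagPart_apply (A : Matrix (Fin (n + 1)) (Fin (n + 1)) F) :
    blockDiagPart A = (A 0 0, A.submatrix Fin.succ Fin.succ) := rfl

theorem blockDiagPart_eq_zero_iff {A : Matrix (Fin (n + 1)) (Fin (n + 1)) F} :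
    blockDiagPart A = 0 ↔ A 0 0 = 0 ∧ A.submatrix Fin.succ Fin.succ = 0 := by
  simp [blockDiagPart_apply, Prod.ext_iff]

/-- If `W` contains the block diagonal parts of all commutators of a nonzero off-diagonal
matrix with square-zero matrices, then `W` has dimension at least `n`. -/
theorem le_finrank_of_commutator_mem {A : Matrix (Fin (n + 1)) (Fin (n + 1)) F} (hA : A ≠ 0)
    (hA0 : blockDiagPart A = 0) (W : Submodule F (F × Matrix (Fin n) (Fin n) F))
    (hW : ∀ N : Matrix (Fin (n + 1)) (Fin (n + 1)) F, N * N = 0 →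
      blockDiagPart (N * A - A * N) ∈ W) :
    n ≤ Module.finrank F W := by
  suffices h : ∃ q : (F × Matrix (Fin n) (Fin n) F) →ₗ[F] (Fin n → F), ∃ c : F, c ≠ 0 ∧
      ∀ j, ∃ N : Matrix (Fin (n + 1)) (Fin (n + 1)) F, N * N = 0 ∧
        q (blockDiagPart (N * A - A * N)) = Pi.single j c by
    obtain ⟨q, c, hc, hq⟩ := h
    choose N hN hqN using hq
    have hli : LinearIndependent F fun j => (⟨_, hW (N j) (hN j)⟩ : W) := by
      refine LinearIndependent.of_comp (q ∘ₗ W.subtype) ?_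
      have : (⇑(q ∘ₗ W.subtype) ∘ fun j => (⟨_, hW (N j) (hN j)⟩ : W)) =
          fun j => Pi.single j c := funext fun j => hqN j
      rw [this]
      exact Pi.linearIndependent_single_of_ne_zero fun _ => hc
    simpa using hli.fintype_card_le_finrank
  obtain ⟨h00, hsub⟩ := blockDiagPart_eq_zero_iff.1 hA0
  have hss : ∀ i j : Fin n, A i.succ j.succ = 0 := fun i j => congr_fun₂ hsub i j
  obtain ⟨k, hk⟩ : ∃ k : Fin n, A 0 k.succ ≠ 0 ∨ A k.succ 0 ≠ 0 := by
    by_contra! h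
    refine hA (Matrix.ext fun i j => ?_)
    refine Fin.cases (Fin.cases h00 (fun j => (h j).1) j)
      (fun i => Fin.cases (h i).2 (fun j => hss i j) j) i
  rcases hk with hk | hk
  · refine ⟨⟨⟨fun B i => B.2 i k, fun _ _ => rfl⟩, fun _ _ => rfl⟩, A 0 k.succ, hk, fun j =>
      ⟨single j.succ 0 1, by simp [(Fin.succ_ne_zero _).symm], ?_⟩⟩
    ext i
    change (_ - _ : Matrix _ _ F) _ _ = _
    by_cases hij : i = j
    · subst hij
      simp
    · simp [hij]
  · refine ⟨⟨⟨fun B i => B.2 k i, fun _ _ => rfl⟩, fun _ _ => rfl⟩, -A k.succ 0, neg_ne_zero.2 hk,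
      fun j => ⟨single 0 j.succ 1, by simp [Fin.succ_ne_zero], ?_⟩⟩
    ext i
    change (_ - _ : Matrix _ _ F) _ _ = _
    by_cases hij : i = j
    · subst hij
      simp
    · simp [hij]

open Polynomial in
/-- If the block diagonal part is not injective on `L`, then conjugation can increase the
dimension of the image, without making the top left entry vanish on `L`. -/
theorem exists_conjLinear_finrank_lt [Infinite F]
    (L : Submodule F (Matrix (Fin (n + 1)) (Fin (n + 1)) F)) (hL : Module.finrank F L ≤ n)
    (h00 : ∃ A ∈ L, A 0 0 ≠ 0)
    (hlt : Module.finrank F (L.map blockDiagPart) < Module.finrank F L) :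
    ∃ S : (Matrix (Fin (n + 1)) (Fin (n + 1)) F)ˣ, (∃ A ∈ L, conjLinear S A 0 0 ≠ 0) ∧
      Module.finrank F (L.map blockDiagPart) <
        Module.finrank F (L.map (blockDiagPart ∘ₗ conjLinear S)) := by
  obtain ⟨A, hAL, hA0, hA⟩ : ∃ A ∈ L, blockDiagPart A = 0 ∧ A ≠ 0 := by
    by_contra! h
    refine hlt.ne (LinearEquiv.finrank_eq (LinearEquiv.ofBijective
      (blockDiagPart.submoduleMap L) ⟨?_, LinearMap.submoduleMap_surjective _ _⟩)).symm
    refine (injective_iff_map_eq_zero _).2 fun x hx => Subtype.ext (h x x.2 ?_)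
    exact congrArg Subtype.val hx
  obtain ⟨N, hN, hNA⟩ : ∃ N : Matrix (Fin (n + 1)) (Fin (n + 1)) F, N * N = 0 ∧
      blockDiagPart (N * A - A * N) ∉ L.map blockDiagPart := by
    by_contra! h
    have := le_finrank_of_commutator_mem hA hA0 _ h
    omega
  obtain ⟨B, hBL, hB⟩ := h00
  let A₀ := blockDiagPart ∘ₗ L.subtype
  let A₁ := blockDiagPart ∘ₗ (LinearMap.mulLeft F N - LinearMap.mulRight F N) ∘ₗ L.subtype
  let A₂ := blockDiagPart ∘ₗ (-LinearMap.mulLeftRight F (N, N)) ∘ₗ L.subtype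
  have hrange : ∀ f : Matrix (Fin (n + 1)) (Fin (n + 1)) F →ₗ[F] F × Matrix (Fin n) (Fin n) F,
      LinearMap.range (f ∘ₗ L.subtype) = L.map f := fun f => by
    rw [LinearMap.range_comp, Submodule.range_subtype]
  obtain ⟨p, hp, hpt⟩ := LinearMap.exists_polynomial_finrank_range_lt A₀ A₁ A₂
    (x := ⟨A, hAL⟩) hA0 (by rw [hrange]; exact hNA)
  let q : F[X] := C (B 0 0) + X * C ((N * B - B * N) 0 0) - X ^ 2 * C ((N * B * N) 0 0)
  have hq : q ≠ 0 := fun h => hB (by simpa [q] using congrArg (eval 0) h)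
  obtain ⟨t, ht⟩ : ∃ t, (p * q).eval t ≠ 0 := by
    by_contra! h
    exact mul_ne_zero hp hq (Polynomial.funext fun t => by simpa using h t)
  rw [eval_mul, mul_ne_zero_iff] at ht
  refine ⟨unipotent (t • N) (by simp [hN]), ⟨B, hBL, ?_⟩, ?_⟩
  · rw [conjLinear_unipotent_apply]
    convert ht.2 using 1
    simp [q, smul_smul, pow_two]
    ring
  · have hA : (blockDiagPart ∘ₗ conjLinear (unipotent (t • N) (by simp [hN]))) ∘ₗ L.subtype =
        A₀ + t • A₁ + t ^ 2 • A₂ := by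
      ext1 x
      simp only [A₀, A₁, A₂, LinearMap.comp_apply, LinearMap.add_apply, LinearMap.smul_apply,
        conjLinear_unipotent_apply, ← map_smul, ← map_add]
      congr 1
      simp [smul_smul, pow_two, sub_eq_add_neg]
    rw [← hrange, ← hrange, hA]
    exact hpt t ht.1

/-- A nonzero subspace of dimension at most `n` has a conjugate on which the block diagonal
part is injective and the top left entry is not identically zero. -/
theorem exists_conjLinear_blockDiagPart_injOn [Infinite F]
    (L : Submodule F (Matrix (Fin (n + 1)) (Fin (n + 1)) F)) (hL : Module.finrank F L ≤ n)
    (hL0 : L ≠ ⊥) :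
    ∃ S : (Matrix (Fin (n + 1)) (Fin (n + 1)) F)ˣ, (∃ A ∈ L, conjLinear S A 0 0 ≠ 0) ∧
      ∀ A ∈ L, blockDiagPart (conjLinear S A) = 0 → A = 0 := by
  have key : ∀ k ≤ Module.finrank F L, ∃ S : (Matrix (Fin (n + 1)) (Fin (n + 1)) F)ˣ,
      (∃ A ∈ L, conjLinear S A 0 0 ≠ 0) ∧
        k ≤ Module.finrank F (L.map (blockDiagPart ∘ₗ conjLinear S)) := by
    intro k
    induction k with
    | zero =>
      intro _
      obtain ⟨A, hAL, hA⟩ := L.ne_bot_iff.1 hL0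
      obtain ⟨S, hS⟩ := exists_conjLinear_diag_ne_zero hA 0
      exact ⟨S, ⟨A, hAL, hS⟩, Nat.zero_le _⟩
    | succ k ih =>
      intro hk
      obtain ⟨S, ⟨A, hAL, hA⟩, hS⟩ := ih (by omega)
      by_cases hSk : k + 1 ≤ Module.finrank F (L.map (blockDiagPart ∘ₗ conjLinear S))
      · exact ⟨S, ⟨A, hAL, hA⟩, hSk⟩
      have hfin : Module.finrank F (L.map (conjLinear S)) = Module.finrank F L :=
        (LinearEquiv.finrank_eq (Submodule.equivMapOfInjective _ (conjLinear_injective S) L)).symm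
      obtain ⟨T, ⟨B, hB, hB0⟩, hT⟩ := exists_conjLinear_finrank_lt (L.map (conjLinear S))
        (by omega) ⟨_, Submodule.mem_map_of_mem hAL, hA⟩
        (by rw [← Submodule.map_comp]; omega)
      obtain ⟨B, hBL, rfl⟩ := hB
      have hcomp : (blockDiagPart ∘ₗ conjLinear T) ∘ₗ conjLinear S =
          blockDiagPart ∘ₗ conjLinear (F := F) (T * S) := by
        ext1 M
        simp [conjLinear_mul_apply]
      rw [← Submodule.map_comp, ← Submodule.map_comp, hcomp] at hT
      exact ⟨T * S, ⟨B, hBL, by rwa [conjLinear_mul_apply]⟩, by omega⟩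
  obtain ⟨S, h0, hS⟩ := key _ le_rfl
  refine ⟨S, h0, fun A hAL hA => ?_⟩
  have hinj : Function.Injective ((blockDiagPart ∘ₗ conjLinear S).domRestrict L) := by
    rw [← LinearMap.ker_eq_bot, ← Submodule.finrank_eq_zero (R := F)]
    have h1 := LinearMap.finrank_range_add_finrank_ker
      ((blockDiagPart ∘ₗ conjLinear S).domRestrict L)
    rw [LinearMap.range_domRestrict] at h1
    omega
  exact congrArg Subtype.val ((injective_iff_map_eq_zero _).1 hinj ⟨A, hAL⟩ hA)

/-- The block diagonal matrix with blocks `1` and `A`. -/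
def oneBlock (A : Matrix (Fin n) (Fin n) F) : Matrix (Fin (n + 1)) (Fin (n + 1)) F :=
  Matrix.of fun i j => Fin.cases (Fin.cases 1 (fun _ => 0) j)
    (fun i' => Fin.cases 0 (fun j' => A i' j') j) i

@[simp] theorem oneBlock_zero_zero (A : Matrix (Fin n) (Fin n) F) : oneBlock A 0 0 = 1 := rfl

@[simp] theorem oneBlock_zero_succ (A : Matrix (Fin n) (Fin n) F) (j : Fin n) :
    oneBlock A 0 j.succ = 0 := rfl

@[simp] theorem oneBlock_succ_zero (A : Matrix (Fin n) (Fin n) F) (i : Fin n) :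
    oneBlock A i.succ 0 = 0 := rfl

@[simp] theorem oneBlock_succ_succ (A : Matrix (Fin n) (Fin n) F) (i j : Fin n) :
    oneBlock A i.succ j.succ = A i j := rfl

theorem oneBlock_mul (A B : Matrix (Fin n) (Fin n) F) :
    oneBlock A * oneBlock B = oneBlock (A * B) := by
  ext i j
  refine Fin.cases ?_ (fun i => ?_) i <;> refine Fin.cases ?_ (fun j => ?_) j <;>
    simp [Matrix.mul_apply, Fin.sum_univ_succ]

theorem oneBlock_one : oneBlock (1 : Matrix (Fin n) (Fin n) F) = 1 := by
  ext i j
  refine Fin.cases ?_ (fun i => ?_) i <;> refine Fin.cases ?_ (fun j => ?_) j <;>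
    simp [Matrix.one_apply, Fin.succ_ne_zero, (Fin.succ_ne_zero _).symm]

/-- The invertible block diagonal matrix with blocks `1` and `S`. -/
def oneBlockUnit (S : (Matrix (Fin n) (Fin n) F)ˣ) : (Matrix (Fin (n + 1)) (Fin (n + 1)) F)ˣ where
  val := oneBlock S
  inv := oneBlock ((S⁻¹ : (Matrix (Fin n) (Fin n) F)ˣ) : Matrix (Fin n) (Fin n) F)
  val_inv := by rw [oneBlock_mul, Units.mul_inv, oneBlock_one]
  inv_val := by rw [oneBlock_mul, Units.inv_mul, oneBlock_one]

theorem blockDiagPart_conjLinear_oneBlockUnit (S : (Matrix (Fin n) (Fin n) F)ˣ)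
    (A : Matrix (Fin (n + 1)) (Fin (n + 1)) F) :
    blockDiagPart (conjLinear (oneBlockUnit S) A) =
      (A 0 0, conjLinear S (A.submatrix Fin.succ Fin.succ)) := by
  change blockDiagPart (oneBlock _ * A * oneBlock _) = _
  refine Prod.ext ?_ (Matrix.ext fun i j => ?_) <;>
    simp [blockDiagPart_apply, conjLinear_apply, Matrix.mul_apply, Fin.sum_univ_succ]

end Peel

/-- A space of matrices of size `n + 1` of dimension at most `n` has a conjugate on which the
projection to the diagonal is injective. -/
theorem exists_conjLinear_diag_injOn [Infinite F] {n : ℕ}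
    (L : Submodule F (Matrix (Fin (n + 1)) (Fin (n + 1)) F)) (hL : Module.finrank F L ≤ n) :
    ∃ S : (Matrix (Fin (n + 1)) (Fin (n + 1)) F)ˣ,
      ∀ A ∈ L, (∀ i, conjLinear S A i i = 0) → A = 0 := by
  induction n with
  | zero =>
    have : L = ⊥ := Submodule.finrank_eq_zero.1 (by omega)
    exact ⟨1, fun A hA _ => by simpa [this] using hA⟩
  | succ n ih =>
    by_cases hL0 : L = ⊥
    · exact ⟨1, fun A hA _ => by simpa [hL0] using hA⟩
    obtain ⟨S, ⟨B, hBL, hB⟩, hS⟩ := exists_conjLinear_blockDiagPart_injOn L hL hL0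
    let f := LinearMap.fst F F _ ∘ₗ blockDiagPart ∘ₗ conjLinear S
    let g := LinearMap.snd F F _ ∘ₗ blockDiagPart ∘ₗ conjLinear S
    have hlt : L ⊓ LinearMap.ker f < L :=
      inf_lt_left.2 fun h => hB (h hBL)
    have hK := Submodule.finrank_lt_finrank_of_lt hlt
    have hKg := Submodule.finrank_map_le g (L ⊓ LinearMap.ker f)
    obtain ⟨T, hT⟩ := ih ((L ⊓ LinearMap.ker f).map g) (by omega)
    refine ⟨oneBlockUnit T * S, fun A hAL hA => ?_⟩
    simp only [conjLinear_mul_apply] at hA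
    have hb := blockDiagPart_conjLinear_oneBlockUnit T (conjLinear S A)
    have hb0 : conjLinear S A 0 0 = 0 := (congrArg Prod.fst hb).symm.trans (hA 0)
    refine hS A hAL (Prod.ext hb0 (hT _ ⟨A, ⟨hAL, hb0⟩, rfl⟩ fun i => ?_))
    exact (congr_fun₂ (congrArg Prod.snd hb) i i).symm.trans (hA i.succ)

end Matrix


/-- Let `F` be an algebraically closed field and `L ⊆ Mat_n(F)` a linear subspace with
`dim L ≥ n` that is not contained in `sl_n` (i.e. `L` contains a matrix of nonzero trace).
Then there is an invertible matrix `S` such that the projection onto the diagonal maps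
`S L S⁻¹` onto all of `Fⁿ`. -/
theorem exists_conjugation_diagonal_surjective {F : Type*} [Field F] [IsAlgClosed F]
    {n : ℕ} (L : Submodule F (Matrix (Fin n) (Fin n) F))
    (hdim : n ≤ Module.finrank F L)
    (htr : ∃ A ∈ L, A.trace ≠ 0) :
    ∃ S : (Matrix (Fin n) (Fin n) F)ˣ,
      ∀ v : Fin n → F, ∃ A ∈ L,
        (fun i : Fin n => ((S : Matrix (Fin n) (Fin n) F) * A *
          ((S⁻¹ : (Matrix (Fin n) (Fin n) F)ˣ) : Matrix (Fin n) (Fin n) F)) i i) = v := by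
  obtain ⟨B, hBL, hB⟩ := htr
  cases n with
  | zero => exact absurd (by simp [Matrix.trace]) hB
  | succ n =>
  let τ := Matrix.traceLinearMap (Fin (n + 1)) F F
  have hker : n ≤ Module.finrank F (L ⊓ LinearMap.ker τ : Submodule F _) := by
    have h1 := LinearMap.finrank_range_add_finrank_ker (τ.domRestrict L)
    have h2 : Module.finrank F (LinearMap.range (τ.domRestrict L)) ≤ 1 :=
      (Submodule.finrank_le _).trans (Module.finrank_self F).le
    have h3 : Module.finrank F (LinearMap.ker (τ.domRestrict L)) =
        Module.finrank F (L ⊓ LinearMap.ker τ : Submodule F _) := by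
      rw [LinearMap.ker_domRestrict, ← Submodule.map_comap_subtype,
        Submodule.finrank_map_subtype_eq]
    omega
  obtain ⟨f, hf⟩ := exists_linearIndependent_of_le_finrank hker
  obtain ⟨K, hKL, hK⟩ : ∃ K ≤ L ⊓ LinearMap.ker τ, Module.finrank F K = n :=
    ⟨(Submodule.span F (Set.range f)).map (Submodule.subtype _), Submodule.map_subtype_le _ _, by
      rw [Submodule.finrank_map_subtype_eq, finrank_span_eq_card hf, Fintype.card_fin]⟩
  obtain ⟨S, hS⟩ := Matrix.exists_conjLinear_diag_injOn K hK.le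
  let δ := Matrix.diagLinearMap (Fin (n + 1)) F F ∘ₗ Matrix.conjLinear S
  have hsum : ∀ A, ∑ i, δ A i = A.trace := fun A => by
    change (Matrix.conjLinear S A).trace = A.trace
    rw [Matrix.conjLinear_apply, Matrix.trace_mul_cycle, Units.inv_mul, one_mul]
  have hKδ : Module.finrank F (K.map δ) = n := by
    refine Eq.trans (LinearEquiv.finrank_eq (LinearEquiv.ofBijective (δ.submoduleMap K)
      ⟨(injective_iff_map_eq_zero _).2 fun x hx => Subtype.ext (hS x x.2 fun i => ?_),
        LinearMap.submoduleMap_surjective _ _⟩)).symm hK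
    exact congr_fun (congrArg Subtype.val hx) i
  have hlt : K.map δ < L.map δ := by
    refine lt_of_le_of_ne (Submodule.map_mono (hKL.trans inf_le_left)) fun h => ?_
    obtain ⟨C, hCK, hC⟩ : δ B ∈ K.map δ := h ▸ Submodule.mem_map_of_mem hBL
    exact hB (by rw [← hsum, ← hC, hsum]; exact (hKL hCK).2)
  have hfr := Submodule.finrank_lt_finrank_of_lt hlt
  have htop : L.map δ = ⊤ := Submodule.eq_top_of_finrank_eq
    (le_antisymm (Submodule.finrank_le _) (by rw [Module.finrank_fin_fun]; omega))
  exact ⟨S, fun v => (htop ▸ Submodule.mem_top : v ∈ L.map δ)⟩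
end

section
/- Let F be a field and M an n×n matrix over F. Then all principal minors of M (including det M and the empty minor 1) are nonzero if and only if for all diagonal n×n matrices Z₁ and Z₂ such that for each index i the pair ((Z₁)_{ii}, (Z₂)_{ii}) ≠ (0,0), the determinant of the 2n×2n block matrix [[Z₁, Z₂],[M, λI]] is not the zero polynomial in λ. (Equivalently: M is 𝒟-nondegenerate for the set 𝒟 of diagonal matrices, whose closure in Grass(n,2n) consists exactly of the subspaces rowsp[Z₁ Z₂] with Z₁, Z₂ diagonal and ((Z₁)_{ii},(Z₂)_{ii}) ≠ (0,0) for every i.) -/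
open Matrix Polynomial

namespace Matrix

/-- If the lower right block is a regular scalar, the determinant of a block matrix is that of
`r • A - B * C`. -/
theorem det_fromBlocks_smul_one {R m : Type*} [CommRing R] [IsDomain R] [Fintype m]
    [DecidableEq m] (A B C : Matrix m m R) {r : R} (hr : r ≠ 0) :
    (fromBlocks A B C (r • 1)).det = (r • A - B * C).det := by
  have h : fromBlocks A B C (r • 1) * fromBlocks (r • 1) 0 (-C) 1 =
      fromBlocks (r • A - B * C) B 0 (r • 1) := by
    simp [fromBlocks_multiply, sub_eq_add_neg]
  have hdet := congrArg det h
  rw [det_mul, det_fromBlocks_zero₁₂, det_fromBlocks_zero₂₁, det_one, mul_one] at hdet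
  exact mul_right_cancel₀ (by simp [hr]) hdet

/-- A matrix whose rows outside `p` are diagonal has determinant the product of the principal
minor on `p` and the remaining diagonal entries. -/
theorem det_eq_toSquareBlockProp_det_mul_prod {R m : Type*} [CommRing R] [Fintype m]
    [DecidableEq m] (N : Matrix m m R) (p : m → Prop) [DecidablePred p]
    (h : ∀ i, ¬p i → ∀ j, i ≠ j → N i j = 0) :
    N.det = (N.toSquareBlockProp p).det * ∏ i : {i // ¬p i}, N i i := by
  rw [N.twoBlockTriangular_det p fun i hi j hj => h i hi j fun hij => hi (hij ▸ hj)]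
  congr 1
  have hd : (N.toSquareBlockProp fun i => ¬p i) = diagonal fun i : {i // ¬p i} => N i i := by
    ext i j
    obtain rfl | hij := eq_or_ne i j
    · simp [toSquareBlockProp_def]
    · simpa [toSquareBlockProp_def, hij] using h i i.2 j (Subtype.coe_injective.ne hij)
  rw [hd, det_diagonal]

/-- Enumerating a finset in increasing order does not change the principal minor. -/
theorem det_submatrix_orderEmbOfFin {R m : Type*} [CommRing R] [Fintype m] [LinearOrder m]
    (M : Matrix m m R) (I : Finset m) :
    (M.submatrix (I.orderEmbOfFin rfl) (I.orderEmbOfFin rfl)).det =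
      (M.toSquareBlockProp (· ∈ I)).det :=
  det_submatrix_equiv_self (I.orderIsoOfFin rfl).toEquiv (M.toSquareBlockProp (· ∈ I))

/-- If `d₂` vanishes outside `I`, the determinant of `[[diag d₁, diag d₂], [M, X I]]` splits off
the diagonal entries outside `I`. -/
theorem det_fromBlocks_diagonal_X {R m : Type*} [CommRing R] [IsDomain R] [Fintype m]
    [DecidableEq m] (M : Matrix m m R) (d₁ d₂ : m → R) (I : Finset m)
    (h : ∀ i ∉ I, d₂ i = 0) :
    (fromBlocks ((diagonal d₁).map C) ((diagonal d₂).map C) (M.map C) ((X : R[X]) • 1)).det =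
      (((X : R[X]) • (diagonal d₁).map C - (diagonal d₂ * M).map C).toSquareBlockProp
        (· ∈ I)).det * ∏ i : {i // i ∉ I}, X * C (d₁ i) := by
  rw [det_fromBlocks_smul_one _ _ _ X_ne_zero, ← Matrix.map_mul,
    det_eq_toSquareBlockProp_det_mul_prod _ (· ∈ I)]
  · have hprod (i : {i // i ∉ I}) :
        ((X : R[X]) • (diagonal d₁).map C - (diagonal d₂ * M).map C) i i = X * C (d₁ i) := by
      simp [h i i.2]
    simp_rw [hprod]
    congr!
  · intro i hi j hij
    simp [h i hi, hij]

end Matrix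

/-- Let `M` be an `n × n` matrix over a field `F`. All principal minors of `M` are nonzero
if and only if for all diagonal matrices `Z₁ = diagonal d₁` and `Z₂ = diagonal d₂` such
that `(d₁ i, d₂ i) ≠ (0, 0)` for every `i`, the determinant of the `2n × 2n` block matrix
`[[Z₁, Z₂], [M, λ I]]` is not the zero polynomial in `λ`.  (This says exactly that `M` is
`𝒟`-nondegenerate for the set `𝒟` of diagonal matrices.) -/
theorem principal_minors_ne_zero_iff_nondegenerate {F : Type*} [Field F] {n : ℕ}
    (M : Matrix (Fin n) (Fin n) F) :
    (∀ I : Finset (Fin n),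
        (M.submatrix (I.orderEmbOfFin rfl) (I.orderEmbOfFin rfl)).det ≠ 0) ↔
      ∀ d₁ d₂ : Fin n → F, (∀ i, ¬(d₁ i = 0 ∧ d₂ i = 0)) →
        (Matrix.fromBlocks
            ((Matrix.diagonal d₁).map Polynomial.C)
            ((Matrix.diagonal d₂).map Polynomial.C)
            (M.map Polynomial.C)
            ((Polynomial.X : Polynomial F) • 1)).det ≠ 0 := by
  classical
  simp_rw [det_submatrix_orderEmbOfFin]
  constructor
  · intro hM d₁ d₂ hd
    let I : Finset (Fin n) := Finset.univ.filter (d₂ · ≠ 0)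
    have hI : ∀ i ∉ I, d₂ i = 0 := fun i hi => by simpa [I] using hi
    rw [det_fromBlocks_diagonal_X M d₁ d₂ I hI]
    refine mul_ne_zero (fun h0 => ?_) (Finset.prod_ne_zero_iff.2 fun i _ =>
      mul_ne_zero X_ne_zero (C_ne_zero.2 fun h => hd i ⟨h, hI i i.2⟩))
    have hev := congrArg (evalRingHom (0 : F)) h0
    rw [RingHom.map_det, map_zero] at hev
    have hblock : (evalRingHom (0 : F)).mapMatrix
        (((X : F[X]) • (diagonal d₁).map C - (diagonal d₂ * M).map C).toSquareBlockProp
          (· ∈ I)) =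
        diagonal (fun i : {i // i ∈ I} => -d₂ i) * M.toSquareBlockProp (· ∈ I) := by
      ext i j
      simp [toSquareBlockProp_def]
    rw [hblock, det_mul, det_diagonal] at hev
    refine mul_ne_zero (Finset.prod_ne_zero_iff.2 fun i _ => ?_) (hM I) hev
    exact neg_ne_zero.2 (Finset.mem_filter.1 i.2).2
  · intro hD I hI
    let d₁ : Fin n → F := fun i => if i ∈ I then 0 else 1
    let d₂ : Fin n → F := fun i => if i ∈ I then -1 else 0
    refine hD d₁ d₂ (fun i => by by_cases hi : i ∈ I <;> simp [d₁, d₂, hi]) ?_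
    have hblock :
        ((X : F[X]) • (diagonal d₁).map C - (diagonal d₂ * M).map C).toSquareBlockProp
          (· ∈ I) = (C : F →+* F[X]).mapMatrix (M.toSquareBlockProp (· ∈ I)) := by
      ext1 i j
      simp [toSquareBlockProp_def, d₁, d₂, diagonal_apply]
    rw [det_fromBlocks_diagonal_X M d₁ d₂ I fun i hi => by simp [d₂, hi], hblock,
      ← RingHom.map_det, hI, map_zero, zero_mul]
end

section
/- (Friedland's theorem over an algebraically closed field) Let F be an algebraically closed field and let M be an n×n matrix over F all of whose principal minors are nonzero. Then for every monic polynomial p(λ) of degree n over F there exists a diagonal matrix Z over F such that det(λI − MZ) = p(λ). -/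
open Matrix

/-- The `k`-th coefficient of the characteristic polynomial is homogeneous of degree `n - k` in the
entries of the matrix. -/
theorem Matrix.coeff_charpoly_smul {R ι : Type*} [CommRing R] [IsDomain R] [Fintype ι]
    [DecidableEq ι] (N : Matrix ι ι R) {c : R} (hc : c ≠ 0) {k : ℕ} (hk : k ≤ Fintype.card ι) :
    (c • N).charpoly.coeff k = c ^ (Fintype.card ι - k) * N.charpoly.coeff k := by
  have key : (c • N).charpoly.comp (Polynomial.C c * Polynomial.X) =
      Polynomial.C (c ^ Fintype.card ι) * N.charpoly := by
    have h := RingHom.map_det (Polynomial.compRingHom (Polynomial.C c * Polynomial.X))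
      (c • N).charmatrix
    rw [Matrix.charpoly, Matrix.charpoly, Polynomial.C_pow, ← Matrix.det_smul]
    refine h.trans (congrArg Matrix.det ?_)
    ext1 i j
    by_cases hij : i = j
    · subst hij
      simp [mul_sub]
    · simp [Matrix.charmatrix_apply_ne _ _ _ hij]
  have h := congrArg (Polynomial.coeff · k) key
  simp only [Polynomial.comp_C_mul_X_coeff, Polynomial.coeff_C_mul] at h
  apply mul_right_cancel₀ (pow_ne_zero k hc)
  rw [h, mul_right_comm, ← pow_add, Nat.sub_add_cancel hk]

/-- If all principal minors of `M` are nonzero, the only diagonal matrix `D` for which `M * D` is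
nilpotent is zero. -/
theorem Matrix.eq_zero_of_charpoly_mul_diagonal_eq_X_pow {k ι : Type*} [Field k] [Fintype ι]
    [DecidableEq ι] (M : Matrix ι ι k)
    (hM : ∀ I : Finset ι, (M.submatrix (Subtype.val : I → ι) Subtype.val).det ≠ 0)
    (d : ι → k) (h : (M * diagonal d).charpoly = Polynomial.X ^ Fintype.card ι) : d = 0 := by
  classical
  set N := M * diagonal d with hN
  set I : Finset ι := Finset.univ.filter (d · ≠ 0) with hI
  set e := Equiv.sumCompl (· ∈ I)
  set N₁ := N.submatrix (Subtype.val : I → ι) Subtype.val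
  have hblock : reindex e.symm e.symm N = fromBlocks N₁ 0
      (N.submatrix (Subtype.val : {i // i ∉ I} → ι) (Subtype.val : I → ι)) 0 := by
    ext (i | i) (j | j)
    · rfl
    · have : d j = 0 := by simpa [hI] using j.2
      simp [N, e, this]
    · rfl
    · have : d j = 0 := by simpa [hI] using j.2
      simp [N, e, this]
  have hdvd : N₁.charpoly ∣ Polynomial.X ^ Fintype.card ι := by
    rw [← h, ← charpoly_reindex e.symm, hblock, charpoly_fromBlocks_zero₁₂]
    exact dvd_mul_right _ _
  obtain ⟨m, -, hm⟩ := (dvd_prime_pow Polynomial.prime_X _).1 hdvd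
  have hm := Polynomial.eq_of_monic_of_associated N₁.charpoly_monic (Polynomial.monic_X_pow m) hm
  have hdet : N₁.det ≠ 0 := by
    have : N₁ = M.submatrix (Subtype.val : I → ι) Subtype.val * diagonal (fun i : I ↦ d i) := by
      ext i j; simp [N₁, hN]
    rw [this, det_mul, det_diagonal]
    exact mul_ne_zero (hM I) (Finset.prod_ne_zero_iff.2 fun i _ ↦ (Finset.mem_filter.1 i.2).2)
  have hm0 : m = 0 := by
    by_contra h0
    apply hdet
    rw [det_eq_sign_charpoly_coeff, hm]
    simp [Polynomial.coeff_X_pow, Ne.symm h0]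
  have hcard := congrArg Polynomial.natDegree hm
  rw [charpoly_natDegree_eq_dim, hm0] at hcard
  simp only [Fintype.card_coe, pow_zero, Polynomial.natDegree_one, Finset.card_eq_zero] at hcard
  ext i
  by_contra hi
  have : i ∈ I := by simpa [hI] using hi
  simp [hcard] at this

/-- If all principal minors of `M` are nonzero, a valuation subring containing the coefficients of the
characteristic polynomial of `M * diagonal x` contains the entries of `x`. -/
theorem ValuationSubring.mem_of_coeff_charpoly_mul_diagonal_mem {F K ι : Type*} [Field F] [Field K]
    [Fintype ι] [DecidableEq ι] (V : ValuationSubring K) (φ : F →+* V) (M : Matrix ι ι F)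
    (hM : ∀ I : Finset ι, (M.submatrix (Subtype.val : I → ι) Subtype.val).det ≠ 0)
    (x : ι → K)
    (hx : ∀ j, (M.map (V.subtype.comp φ) * diagonal x).charpoly.coeff j ∈ V) (i : ι) :
    x i ∈ V := by
  by_contra hi
  obtain ⟨m, -, hm⟩ := Finset.exists_max_image Finset.univ (fun j ↦ V.valuation (x j))
    ⟨i, Finset.mem_univ i⟩
  have hlt : 1 < V.valuation (x m) :=
    (lt_of_not_ge fun h ↦ hi ((V.valuation_le_one_iff _).1 h)).trans_le
      (hm i (Finset.mem_univ i))
  have hm0 : x m ≠ 0 := fun h ↦ by simp [h] at hlt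
  set c : K := (x m)⁻¹ with hc
  have hc0 : c ≠ 0 := inv_ne_zero hm0
  have hc1 : V.valuation c < 1 := by
    rw [hc, map_inv₀]
    exact inv_lt_one_of_one_lt₀ hlt
  have hy (j : ι) : c * x j ∈ V := by
    rw [← V.valuation_le_one_iff, map_mul, hc, map_inv₀, inv_mul_le_one₀ (zero_lt_one.trans hlt)]
    exact hm j (Finset.mem_univ j)
  let y : ι → V := fun j ↦ ⟨c * x j, hy j⟩
  set N : Matrix ι ι V := M.map φ * diagonal y
  have hmap : N.map V.subtype = c • (M.map (V.subtype.comp φ) * diagonal x) := by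
    ext a b
    simp [N, y]
    ring
  have hcoeff {j : ℕ} (hj : j < Fintype.card ι) :
      N.charpoly.coeff j ∈ IsLocalRing.maximalIdeal V := by
    refine (V.valuation_lt_one_iff _).2 ?_
    have : ((N.charpoly.coeff j : V) : K) = (N.map V.subtype).charpoly.coeff j := by
      rw [charpoly_map, Polynomial.coeff_map]; rfl
    rw [this, hmap, coeff_charpoly_smul _ hc0 hj.le, map_mul, map_pow]
    exact mul_lt_one_of_lt_of_le (pow_lt_one₀ zero_le hc1 (Nat.sub_ne_zero_of_lt hj))
      ((V.valuation_le_one_iff _).2 (hx j))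
  let r := IsLocalRing.residue V
  have hred : (M.map (r.comp φ) * diagonal (r ∘ y)).charpoly = Polynomial.X ^ Fintype.card ι := by
    have : M.map (r.comp φ) * diagonal (r ∘ y) = N.map r := by
      ext a b; simp [N]
    rw [this]
    ext j
    rw [Polynomial.coeff_X_pow]
    rcases lt_trichotomy j (Fintype.card ι) with hj | rfl | hj
    · rw [if_neg hj.ne, charpoly_map, Polynomial.coeff_map]
      exact (IsLocalRing.residue_eq_zero_iff _).2 (hcoeff hj)
    · rw [if_pos rfl]
      simpa [Polynomial.Monic, Polynomial.leadingCoeff, charpoly_natDegree_eq_dim] using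
        (N.map r).charpoly_monic
    · rw [if_neg hj.ne']
      exact Polynomial.coeff_eq_zero_of_natDegree_lt (by rwa [charpoly_natDegree_eq_dim])
  have := congrFun (eq_zero_of_charpoly_mul_diagonal_eq_X_pow _ (fun I ↦ ?_) _ hred) m
  · have h1 : y m = 1 := Subtype.ext (inv_mul_cancel₀ hm0)
    simp [h1] at this
  · rw [submatrix_map]
    have := RingHom.map_det (r.comp φ) (M.submatrix (Subtype.val : I → ι) Subtype.val)
    rw [RingHom.mapMatrix_apply] at this
    rw [← this]
    exact (map_ne_zero _).2 (hM I)

/-- A polynomial self-map of affine space over an algebraically closed field is surjective if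
the polynomial ring is integral over the subalgebra generated by its components. -/
theorem MvPolynomial.exists_eval_eq_of_isIntegral {F ι : Type*} [Field F] [IsAlgClosed F]
    [Finite ι] (f : ι → MvPolynomial ι F)
    [hf : Algebra.IsIntegral (Algebra.adjoin F (Set.range f)) (MvPolynomial ι F)] (c : ι → F) :
    ∃ x : ι → F, ∀ i, eval x (f i) = c i := by
  have hb : IsTranscendenceBasis F f :=
    Algebra.IsAlgebraic.isTranscendenceBasis_of_lift_le_trdeg_of_finite F f
      (by rw [MvPolynomial.trdeg_of_isDomain]; simp)
  have hint : (aeval (R := F) f).toRingHom.IsIntegral := by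
    rw [Algebra.adjoin_range_eq_range_aeval] at hf
    exact (RingHom.isIntegral_of_surjective _ (AlgHom.rangeRestrict_surjective _)).trans
      (aeval (R := F) f).rangeRestrict.toRingHom _ (algebraMap_isIntegral_iff.2 hf)
  have htop : (vanishingIdeal F {c}).map (aeval (R := F) f).toRingHom ≠ ⊤ := by
    rw [Ne, Ideal.map_eq_top_iff _ hb.1 hint]
    exact ((isMaximal_iff_eq_vanishingIdeal_singleton).2 ⟨c, rfl⟩).ne_top
  obtain ⟨Q, hQ, hle⟩ := Ideal.exists_le_maximal _ htop
  obtain ⟨x, rfl⟩ := eq_vanishingIdeal_singleton_of_isMaximal F hQ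
  refine ⟨x, fun i ↦ ?_⟩
  have hi : X i - C (c i) ∈ vanishingIdeal F {c} := by simp
  have := hle (Ideal.mem_map_of_mem _ hi)
  rw [mem_vanishingIdeal_singleton_iff] at this
  simpa [sub_eq_zero, aeval_eq_eval] using this

/-- If all principal minors of `M` are nonzero, the polynomial ring in the diagonal entries is
integral over the coefficients of the generic characteristic polynomial of `M * D`. -/
theorem MvPolynomial.isIntegral_of_coeff_charpoly_mem {F ι : Type*} [Field F]
    [Fintype ι] [DecidableEq ι] (M : Matrix ι ι F)
    (hM : ∀ I : Finset ι, (M.submatrix (Subtype.val : I → ι) Subtype.val).det ≠ 0)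
    (B : Subalgebra F (MvPolynomial ι F))
    (hB : ∀ j, (M.map C * diagonal X).charpoly.coeff j ∈ B) :
    Algebra.IsIntegral B (MvPolynomial ι F) := by
  let K := FractionRing (MvPolynomial ι F)
  have hX (i : ι) : IsIntegral B (X i : MvPolynomial ι F) := by
    rw [← isIntegral_algebraMap_iff (B := K) (IsFractionRing.injective _ _)]
    by_contra hi
    obtain ⟨V, hRV, hV⟩ :=
      (integralClosure B K).toSubring.exists_le_valuationSubring_of_isIntegrallyClosedIn hi
    have hBV (b : MvPolynomial ι F) (hb : b ∈ B) : algebraMap _ K b ∈ V :=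
      hRV (isIntegral_algebraMap (x := (⟨b, hb⟩ : B)))
    let φ : F →+* V := ((algebraMap (MvPolynomial ι F) K).comp C).codRestrict V.toSubring
      fun a ↦ hBV _ (B.algebraMap_mem a)
    refine hV (V.mem_of_coeff_charpoly_mul_diagonal_mem φ M hM
      (fun j ↦ algebraMap _ K (X j)) (fun j ↦ ?_) i)
    have : M.map (V.subtype.comp φ) * diagonal (fun j ↦ algebraMap (MvPolynomial ι F) K (X j)) =
        (M.map C * diagonal X).map (algebraMap (MvPolynomial ι F) K) := by
      ext a b
      rw [mul_diagonal, map_apply, map_apply, mul_diagonal, map_apply, map_mul]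
      rfl
    rw [this, charpoly_map, Polynomial.coeff_map]
    exact hBV _ (hB j)
  refine ⟨fun p ↦ ?_⟩
  induction p using MvPolynomial.induction_on with
  | C a => exact isIntegral_algebraMap (x := algebraMap F B a)
  | add p q hp hq => exact hp.add hq
  | mul_X p i hp => exact hp.mul (hX i)

/-- (Friedland's theorem over an algebraically closed field.)
Let `F` be an algebraically closed field and `M` an `n × n` matrix over `F` all of whose
principal minors are nonzero.  Then for every monic polynomial `p` of degree `n` over `F`
there is a diagonal matrix `Z` with `det (λ I - M Z) = p(λ)`. -/
theorem multiplicative_inverse_eigenvalue_diagonal {F : Type*} [Field F] [IsAlgClosed F]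
    {n : ℕ} (M : Matrix (Fin n) (Fin n) F)
    (hM : ∀ I : Finset (Fin n),
      (M.submatrix (I.orderEmbOfFin rfl) (I.orderEmbOfFin rfl)).det ≠ 0) :
    ∀ p : Polynomial F, p.Monic → p.natDegree = n →
      ∃ d : Fin n → F, (M * Matrix.diagonal d).charpoly = p := by
  intro p hp hn
  have hM' (I : Finset (Fin n)) :
      (M.submatrix (Subtype.val : I → Fin n) Subtype.val).det ≠ 0 := by
    rw [← det_submatrix_equiv_self (I.orderIsoOfFin rfl).toEquiv]
    exact hM I
  let P := (M.map MvPolynomial.C * diagonal MvPolynomial.X).charpoly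
  have hPdeg : P.natDegree = n := by simp [P, charpoly_natDegree_eq_dim]
  let f (i : Fin n) : MvPolynomial (Fin n) F := P.coeff i
  have : Algebra.IsIntegral (Algebra.adjoin F (Set.range f)) (MvPolynomial (Fin n) F) := by
    refine MvPolynomial.isIntegral_of_coeff_charpoly_mem M hM' _ fun j ↦ ?_
    change P.coeff j ∈ _
    rcases lt_trichotomy j n with hj | hj | hj
    · exact Algebra.subset_adjoin ⟨⟨j, hj⟩, rfl⟩
    · have h : P.coeff P.natDegree = 1 := (charpoly_monic _).coeff_natDegree
      rw [hPdeg.trans hj.symm] at h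
      rw [h]
      exact one_mem _
    · rw [Polynomial.coeff_eq_zero_of_natDegree_lt (hPdeg.trans_lt hj)]
      exact zero_mem _
  obtain ⟨d, hd⟩ := MvPolynomial.exists_eval_eq_of_isIntegral f fun i ↦ p.coeff i
  have hmap : (M * diagonal d).charpoly = P.map (MvPolynomial.eval d) := by
    rw [← charpoly_map]
    congr 1
    ext a b
    simp
  refine ⟨d, Polynomial.ext fun j ↦ ?_⟩
  have hdeg : (M * diagonal d).charpoly.natDegree = n := by simp [charpoly_natDegree_eq_dim]
  rcases lt_trichotomy j n with hj | hj | hj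
  · rw [hmap, Polynomial.coeff_map]
    exact hd ⟨j, hj⟩
  · have h₁ := (charpoly_monic (M * diagonal d)).coeff_natDegree
    have h₂ := hp.coeff_natDegree
    rw [hdeg.trans hj.symm] at h₁
    rw [hn.trans hj.symm] at h₂
    rw [h₁, h₂]
  · rw [Polynomial.coeff_eq_zero_of_natDegree_lt (hdeg.trans_lt hj),
      Polynomial.coeff_eq_zero_of_natDegree_lt (hn.trans_lt hj)]
end

section
/- Let F be an algebraically closed field and let M be an n×n matrix over F all of whose principal minors are nonzero. Then for every monic polynomial p(λ) of degree n over F, the set of diagonal matrices Z over F with det(λI − MZ) = p(λ) is finite and has at most n! elements (exactly n! when solutions are counted with multiplicities). -/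
open Matrix

open MvPolynomial in
lemma MvPolynomial.finrank_restrictDegree_le (F : Type*) [Field F] (n m : ℕ) :
    Module.finrank F (restrictDegree (Fin n) F m) ≤ (m + 1) ^ n := by
  rw [restrictDegree, Module.finrank_eq_nat_card_basis (basisRestrictSupport F _)]
  let φ : {s : Fin n →₀ ℕ | ∀ i, s i ≤ m} → (Fin n → Fin (m + 1)) :=
    fun s i => ⟨s.1 i, Nat.lt_succ_of_le (s.2 i)⟩
  have hφ : Function.Injective φ := fun s t h => by
    ext i
    simpa [φ] using congrFun h i
  simpa using Nat.card_le_card_of_injective φ hφ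

open MvPolynomial in
lemma MvPolynomial.pow_le_factorial_mul_finrank_restrictTotalDegree (F : Type*) [Field F]
    (n D : ℕ) :
    (D + 1) ^ n ≤ n.factorial * Module.finrank F (restrictTotalDegree (Fin n) F D) := by
  rw [restrictTotalDegree, Module.finrank_eq_nat_card_basis (basisRestrictSupport F _)]
  have hfin : Finite {s : Fin n →₀ ℕ | (s.sum fun _ e => e) ≤ D} :=
    Module.Finite.finite_basis (R := F) (M := restrictTotalDegree (Fin n) F D)
      (basisRestrictSupport F _)
  have hsum (s : Fin (n + 1) →₀ ℕ)
      (hs : s ∈ (Finset.univ : Finset (Fin (n + 1))).finsuppAntidiag D) :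
      s 0 + ∑ i : Fin n, s i.succ = D := by
    rw [← Fin.sum_univ_succ]
    exact (Finset.mem_finsuppAntidiag.1 hs).1
  let φ : (Finset.univ : Finset (Fin (n + 1))).finsuppAntidiag D →
      {s : Fin n →₀ ℕ | (s.sum fun _ e => e) ≤ D} := fun s => ⟨s.1.tail, by
    simpa [Finsupp.sum_fintype, Finsupp.tail_apply] using (Nat.le_add_left _ _).trans_eq (hsum s.1 s.2)⟩
  have hφ : Function.Injective φ := by
    intro s t h
    have h' : s.1.tail = t.1.tail := congrArg Subtype.val h
    have hi (i : Fin n) : s.1 i.succ = t.1 i.succ := DFunLike.congr_fun h' i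
    have hs := hsum s.1 s.2
    have ht := hsum t.1 t.2
    simp only [hi] at hs
    ext i
    refine Fin.cases (by omega) hi i
  have hcard := Nat.card_le_card_of_injective φ hφ
  rw [Nat.card_eq_fintype_card, Fintype.card_coe,
    Finset.card_finsuppAntidiag_nat_eq_choose] at hcard
  calc (D + 1) ^ n ≤ (D + 1).ascFactorial n := Nat.pow_succ_le_ascFactorial _ _
    _ = n.factorial * (D + n).choose n := Nat.ascFactorial_eq_factorial_mul_choose _ _
    _ ≤ _ := by
      refine Nat.mul_le_mul_left _ (le_trans (le_of_eq ?_) hcard)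
      rw [Finset.card_univ, Fintype.card_fin, show n + 1 + D - 1 = D + n by omega,
        Nat.choose_symm_add]

lemma exists_mul_pow_lt_succ_mul_pow (n c N : ℕ) :
    ∃ D : ℕ, N * (D + c + 1) ^ n < (N + 1) * (D + 1) ^ n := by
  have h : Filter.Tendsto (fun D : ℕ => (N : ℝ) * (1 + (c : ℝ) * (1 / ((D : ℝ) + 1))) ^ n)
      Filter.atTop (nhds (N * (1 + c * 0) ^ n)) :=
    (((tendsto_one_div_add_atTop_nhds_zero_nat (𝕜 := ℝ)).const_mul _).const_add _).pow n
      |>.const_mul _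
  have hlim : (N : ℝ) * (1 + c * 0) ^ n < N + 1 := by simp
  obtain ⟨D, hD⟩ := (h.eventually (gt_mem_nhds hlim)).exists
  refine ⟨D, ?_⟩
  have hpos : (0 : ℝ) < ((D : ℝ) + 1) ^ n := by positivity
  have h2 := mul_lt_mul_of_pos_right hD hpos
  rw [mul_assoc, ← mul_pow] at h2
  have h3 : (1 + (c : ℝ) * (1 / ((D : ℝ) + 1))) * (D + 1) = D + c + 1 := by
    field_simp
    ring
  rw [h3] at h2
  exact_mod_cast h2

open MvPolynomial in
lemma MvPolynomial.mem_restrictDegree_iff_degreeOf_le {σ R : Type*} [CommSemiring R]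
    {p : MvPolynomial σ R} {m : ℕ} : p ∈ restrictDegree σ R m ↔ ∀ i, p.degreeOf i ≤ m := by
  simp only [mem_restrictDegree, degreeOf_le_iff]
  exact ⟨fun h i s hs => h s hs i, fun h s hs i => h i s hs⟩

open MvPolynomial in
lemma MvPolynomial.degreeOf_aeval_le {σ ι R : Type*} [CommSemiring R]
    {f : ι → MvPolynomial σ R} (i : σ) (hf : ∀ k, (f k).degreeOf i ≤ 1) (g : MvPolynomial ι R) :
    (aeval f g).degreeOf i ≤ g.totalDegree := by
  rw [aeval_def, eval₂_eq]
  refine (degreeOf_sum_le _ _ _).trans (Finset.sup_le fun s hs => ?_)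
  refine (degreeOf_C_mul_le _ _ _).trans ((degreeOf_prod_le _ _ _).trans ?_)
  refine le_trans (Finset.sum_le_sum fun k _ => ?_) (le_totalDegree hs)
  exact (degreeOf_pow_le _ _ _).trans (by simpa using Nat.mul_le_mul_left (s k) (hf k))

open MvPolynomial in
/-- Any polynomial `θ` in `n` variables is a root of a nonzero polynomial of degree at most `n!`
over the algebra generated by `n` polynomials which have degree at most one in each variable. -/
lemma exists_natDegree_le_factorial_eval₂_aeval_eq_zero {F : Type*} [Field F] {n : ℕ}
    {f : Fin n → MvPolynomial (Fin n) F} (hf : ∀ k i, (f k).degreeOf i ≤ 1)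
    (θ : MvPolynomial (Fin n) F) :
    ∃ q : Polynomial (MvPolynomial (Fin n) F), q ≠ 0 ∧ q.natDegree ≤ n.factorial ∧
      q.eval₂ (aeval f : MvPolynomial (Fin n) F →ₐ[F] MvPolynomial (Fin n) F).toRingHom θ = 0 := by
  set e := θ.totalDegree
  obtain ⟨D, hD⟩ := exists_mul_pow_lt_succ_mul_pow n (n.factorial * e) n.factorial
  let V := restrictTotalDegree (Fin n) F D
  let L₀ : (Fin (n.factorial + 1) → V) →ₗ[F] MvPolynomial (Fin n) F :=
    LinearMap.lsum F (fun _ => V) F fun j =>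
      (LinearMap.mulRight F (θ ^ (j : ℕ))) ∘ₗ (aeval f).toLinearMap ∘ₗ V.subtype
  have hL₀ (g) : L₀ g = ∑ j, aeval f (g j).1 * θ ^ (j : ℕ) := by
    simp [L₀]
  have hmem (g) : L₀ g ∈ restrictDegree (Fin n) F (D + n.factorial * e) := by
    rw [hL₀]
    refine Submodule.sum_mem _ fun j _ => mem_restrictDegree_iff_degreeOf_le.2 fun i => ?_
    refine (degreeOf_mul_le _ _ _).trans (add_le_add ?_ ?_)
    · exact (degreeOf_aeval_le i (fun k => hf k i) _).trans
        ((mem_restrictTotalDegree _ _ _).1 (g j).2)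
    · exact (degreeOf_pow_le _ _ _).trans
        (Nat.mul_le_mul (Nat.lt_succ_iff.1 j.2) (degreeOf_le_totalDegree _ _))
  let L := L₀.codRestrict _ hmem
  have hlt : Module.finrank F (restrictDegree (Fin n) F (D + n.factorial * e)) <
      Module.finrank F (Fin (n.factorial + 1) → V) := by
    rw [Module.finrank_pi_fintype, Finset.sum_const, Finset.card_univ, Fintype.card_fin,
      smul_eq_mul]
    have h1 := finrank_restrictDegree_le F n (D + n.factorial * e)
    have h2 := pow_le_factorial_mul_finrank_restrictTotalDegree F n D
    refine lt_of_mul_lt_mul_left (a := n.factorial) ?_ (Nat.zero_le _)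
    calc _ ≤ _ := Nat.mul_le_mul_left _ h1
      _ < _ := hD
      _ ≤ _ := Nat.mul_le_mul_left _ h2
      _ = _ := by ring
  obtain ⟨g, hg, hg0⟩ := (Submodule.ne_bot_iff _).1
    (LinearMap.ker_ne_bot_of_finrank_lt (f := L) hlt)
  have hLg : ∑ j, aeval f (g j).1 * θ ^ (j : ℕ) = 0 := by
    rw [← hL₀]
    exact congrArg Subtype.val (LinearMap.mem_ker.1 hg)
  refine ⟨∑ j : Fin (n.factorial + 1), Polynomial.monomial (j : ℕ) (g j).1, fun h0 => hg0 ?_, ?_, ?_⟩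
  · funext j
    have := congrArg (Polynomial.coeff · (j : ℕ)) h0
    simpa [Polynomial.finsetSum_coeff, Polynomial.coeff_monomial, Fin.val_inj] using this
  · refine Polynomial.natDegree_sum_le_of_forall_le _ _ fun j _ => ?_
    exact (Polynomial.natDegree_monomial_le _).trans (Nat.lt_succ_iff.1 j.2)
  · simpa [Polynomial.eval₂_finsetSum, Polynomial.eval₂_monomial] using hLg

/-- If the weighted elementary symmetric expressions of `z`, with weights of valuation one, all
have valuation at most one, then so has every `z i`. -/
lemma Valuation.le_one_of_weighted_esymm_le_one {K Γ ι : Type*} [Field K]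
    [LinearOrderedCommGroupWithZero Γ] [Fintype ι] [DecidableEq ι] (v : Valuation K Γ)
    (m : Finset ι → K) (hm : ∀ S, v (m S) = 1) (z : ι → K)
    (h : ∀ k, 0 < k → k ≤ Fintype.card ι →
      v (∑ S ∈ Finset.univ.powersetCard k, m S * ∏ i ∈ S, z i) ≤ 1) (i : ι) :
    v (z i) ≤ 1 := by
  by_contra! hi
  let T : Finset ι := Finset.univ.filter fun j => 1 < v (z j)
  have hiT : i ∈ T := by simpa [T] using hi
  have hT : 0 < T.card := Finset.card_pos.2 ⟨i, hiT⟩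
  have hle := h T.card hT (Finset.card_le_univ T)
  have hval (S : Finset ι) : v (m S * ∏ j ∈ S, z j) = ∏ j ∈ S, v (z j) := by
    rw [map_mul, hm, one_mul, map_prod]
  have hpos (S : Finset ι) (hS : S ⊆ T) : 0 < ∏ j ∈ S, v (z j) :=
    Finset.prod_pos fun j hj => zero_lt_one.trans (Finset.mem_filter.1 (hS hj)).2
  rw [v.map_sum_eq_of_lt (j := T) (by simp), hval] at hle
  · refine hle.not_gt (hi.trans_le ?_)
    rw [← Finset.mul_prod_erase _ _ hiT]
    refine le_mul_of_one_le_right' (Finset.one_le_prod' fun j hj => ?_)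
    exact (Finset.mem_filter.1 (Finset.mem_of_mem_erase hj)).2.le
  · intro S hS
    obtain ⟨hcard, hne⟩ : S.card = T.card ∧ S ≠ T := by simpa using hS
    rw [hval, hval]
    have hss : ¬ T ⊆ S := fun hTS => hne (Finset.eq_of_subset_of_card_le hTS hcard.le).symm
    obtain ⟨j, hjT, hjS⟩ := Finset.not_subset.1 hss
    have h1 : ∏ j ∈ S, v (z j) ≤ ∏ j ∈ S ∩ T, v (z j) := by
      rw [← Finset.prod_inter_mul_prod_sdiff S T]
      refine mul_le_of_le_one_right' (Finset.prod_le_one' fun a ha => ?_)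
      simpa [T, (Finset.mem_sdiff.1 ha).1] using (Finset.mem_sdiff.1 ha).2
    refine h1.trans_lt ?_
    have hsub : S ∩ T ⊆ T.erase j := fun a ha => by
      rw [Finset.mem_inter] at ha
      exact Finset.mem_erase.2 ⟨fun e => hjS (e ▸ ha.1), ha.2⟩
    calc ∏ j ∈ S ∩ T, v (z j) ≤ ∏ j ∈ T.erase j, v (z j) :=
        Finset.prod_le_prod_of_subset_of_one_le' hsub fun a ha _ =>
          (Finset.mem_filter.1 (Finset.mem_of_mem_erase ha)).2.le
      _ < v (z j) * ∏ j ∈ T.erase j, v (z j) :=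
        lt_mul_of_one_lt_left (hpos _ (Finset.erase_subset _ _)) (Finset.mem_filter.1 hjT).2
      _ = _ := Finset.mul_prod_erase T (fun a => v (z a)) hjT

/-- The elementary symmetric polynomial of degree `k` with the coefficient of each squarefree
monomial `∏ i ∈ S, X i` replaced by `m S`. -/
noncomputable def weightedEsymm {ι F : Type*} [CommRing F] [Fintype ι] (m : Finset ι → F) (k : ℕ) :
    MvPolynomial ι F :=
  ∑ S ∈ Finset.univ.powersetCard k, MvPolynomial.C (m S) * ∏ i ∈ S, MvPolynomial.X i

lemma degreeOf_weightedEsymm_le {ι F : Type*} [CommRing F] [Nontrivial F] [Fintype ι]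
    (m : Finset ι → F) (k : ℕ) (i : ι) : (weightedEsymm m k).degreeOf i ≤ 1 := by
  classical
  refine (MvPolynomial.degreeOf_sum_le _ _ _).trans (Finset.sup_le fun S _ => ?_)
  refine (MvPolynomial.degreeOf_C_mul_le _ _ _).trans
    ((MvPolynomial.degreeOf_prod_le _ _ _).trans ?_)
  simp only [MvPolynomial.degreeOf_X, Finset.sum_ite_eq]
  split_ifs <;> simp

lemma isIntegral_adjoin_weightedEsymm {F : Type*} [Field F] {n : ℕ} (m : Finset (Fin n) → F)
    (hm : ∀ S, m S ≠ 0) :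
    Algebra.IsIntegral
      (Algebra.adjoin F (Set.range fun k : Fin n => weightedEsymm m (k + 1)))
      (MvPolynomial (Fin n) F) := by
  set P := MvPolynomial (Fin n) F
  set A := Algebra.adjoin F (Set.range fun k : Fin n => weightedEsymm m (k + 1))
  let K := FractionRing P
  have hA (a : A) : algebraMap P K a ∈ integralClosure A K :=
    (integralClosure A K).algebraMap_mem a
  have hX (i : Fin n) : IsIntegral A (MvPolynomial.X i : P) := by
    rw [← isIntegral_algebraMap_iff (IsFractionRing.injective P K)]
    by_contra hi
    obtain ⟨V, hV, hiV⟩ := Subring.exists_le_valuationSubring_of_isIntegrallyClosedIn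
      (R := (integralClosure A K).toSubring) hi
    have hAV (a : P) (ha : a ∈ A) : V.valuation (algebraMap P K a) ≤ 1 :=
      (V.valuation_le_one_iff _).2 (hV (hA ⟨a, ha⟩))
    have hC (x : F) (hx : x ≠ 0) : V.valuation (algebraMap P K (MvPolynomial.C x)) = 1 := by
      refine le_antisymm (hAV _ (A.algebraMap_mem x)) ?_
      have h1 := hAV _ (A.algebraMap_mem x⁻¹)
      have h2 : algebraMap P K (MvPolynomial.C x) * algebraMap P K (MvPolynomial.C x⁻¹) = 1 := by
        rw [← map_mul, ← map_mul, mul_inv_cancel₀ hx, map_one, map_one]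
      rw [← map_one V.valuation, ← h2, map_mul]
      exact mul_le_of_le_one_right' h1
    refine hiV ((V.valuation_le_one_iff _).1 ?_)
    refine V.valuation.le_one_of_weighted_esymm_le_one
      (fun S => algebraMap P K (MvPolynomial.C (m S))) (fun S => hC _ (hm S))
      (fun i => algebraMap P K (MvPolynomial.X i)) (fun k hk hkn => ?_) i
    have := hAV (weightedEsymm m k) (Algebra.subset_adjoin
      ⟨⟨k - 1, by rw [Fintype.card_fin] at hkn; omega⟩, by simp [Nat.sub_add_cancel hk]⟩)
    simpa [weightedEsymm, map_sum, map_prod] using this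
  refine ⟨fun p => ?_⟩
  induction p using MvPolynomial.induction_on with
  | C a => exact isIntegral_algebraMap (R := A) (x := algebraMap F A a)
  | add p q hp hq => exact hp.add hq
  | mul_X p i hp => exact hp.mul (hX i)

lemma algebraicIndependent_of_isIntegral_adjoin {F : Type*} [Field F] {n : ℕ}
    (f : Fin n → MvPolynomial (Fin n) F)
    [Algebra.IsIntegral (Algebra.adjoin F (Set.range f)) (MvPolynomial (Fin n) F)] :
    AlgebraicIndependent F f :=
  (Algebra.IsAlgebraic.isTranscendenceBasis_of_lift_le_trdeg_of_finite F f
    (by simp [MvPolynomial.trdeg_of_isDomain])).1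

/-- Any polynomial `θ` integral over the algebra generated by `n` polynomials of degree at most one
in each variable is a root of a monic polynomial of degree at most `n!` over that algebra. -/
lemma exists_monic_natDegree_le_factorial {F : Type*} [Field F] {n : ℕ}
    {f : Fin n → MvPolynomial (Fin n) F} (hf : ∀ k i, (f k).degreeOf i ≤ 1)
    [Algebra.IsIntegral (Algebra.adjoin F (Set.range f)) (MvPolynomial (Fin n) F)]
    (θ : MvPolynomial (Fin n) F) :
    ∃ q : Polynomial (MvPolynomial (Fin n) F), q.Monic ∧ q.natDegree ≤ n.factorial ∧
      q.eval₂ (MvPolynomial.aeval f :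
        MvPolynomial (Fin n) F →ₐ[F] MvPolynomial (Fin n) F).toRingHom θ = 0 := by
  set A := Algebra.adjoin F (Set.range f)
  have hind := algebraicIndependent_of_isIntegral_adjoin f
  let e : MvPolynomial (Fin n) F ≃ₐ[F] A := hind.aevalEquiv
  have he (p) : (e p : MvPolynomial (Fin n) F) = MvPolynomial.aeval f p :=
    hind.algebraMap_aevalEquiv p
  have : IsIntegrallyClosed A := .of_equiv e.toRingEquiv
  obtain ⟨q, hq0, hqd, hq⟩ := exists_natDegree_le_factorial_eval₂_aeval_eq_zero hf θ
  have hθ : IsIntegral A θ := Algebra.IsIntegral.isIntegral θ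
  have hcomp : (algebraMap A (MvPolynomial (Fin n) F)).comp (e : MvPolynomial (Fin n) F →+* A) =
      (MvPolynomial.aeval f : MvPolynomial (Fin n) F →ₐ[F] MvPolynomial (Fin n) F).toRingHom :=
    RingHom.ext he
  have hcomp' : (MvPolynomial.aeval f :
      MvPolynomial (Fin n) F →ₐ[F] MvPolynomial (Fin n) F).toRingHom.comp
      (e.symm : A →+* MvPolynomial (Fin n) F) = algebraMap A (MvPolynomial (Fin n) F) := by
    rw [← hcomp]
    ext a
    simp
  have hdeg : (minpoly A θ).natDegree ≤ n.factorial := by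
    refine (Polynomial.natDegree_le_natDegree
      (minpoly.IsIntegrallyClosed.degree_le_of_ne_zero (s := θ)
        (p := q.map (e : MvPolynomial (Fin n) F →+* A)) ?_ ?_)).trans
      (Polynomial.natDegree_map_le.trans hqd)
    · exact (Polynomial.map_ne_zero_iff e.injective).2 hq0
    · rw [Polynomial.aeval_def, Polynomial.eval₂_map, hcomp, hq]
  refine ⟨(minpoly A θ).map (e.symm : A →+* MvPolynomial (Fin n) F), (minpoly.monic hθ).map _,
    Polynomial.natDegree_map_le.trans hdeg, ?_⟩
  rw [Polynomial.eval₂_map, hcomp', ← Polynomial.aeval_def, minpoly.aeval]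

lemma MvPolynomial.exists_injOn_eval {σ F : Type*} [Field F] [Infinite F] [Finite σ]
    (T : Finset (σ → F)) : ∃ θ : MvPolynomial σ F, Set.InjOn (fun d => eval d θ) T := by
  classical
  have := Fintype.ofFinite σ
  obtain ⟨φ, hφ⟩ := Module.exists_dual_forall_apply_ne_zero (K := F)
    (fun p : T.offDiag => p.1.1 - p.1.2)
    (fun p => sub_ne_zero.2 (Finset.mem_offDiag.1 p.2).2.2)
  refine ⟨∑ i, C (φ (Pi.single i 1)) * X i, fun a ha b hb hab => ?_⟩
  have key (d : σ → F) : eval d (∑ i, C (φ (Pi.single i 1)) * X i) = φ d := by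
    have hs (i : σ) : (fun j => if i = j then (1 : F) else 0) = Pi.single i 1 := by
      ext j
      simp [Pi.single_apply, eq_comm]
    simp [φ.pi_apply_eq_sum_univ d, hs, mul_comm]
  by_contra hne
  refine hφ ⟨(a, b), Finset.mem_offDiag.2 ⟨ha, hb, hne⟩⟩ ?_
  simp only [key] at hab
  simp [hab]

lemma card_le_factorial_of_eval_eq {F : Type*} [Field F] [Infinite F] {n : ℕ}
    {f : Fin n → MvPolynomial (Fin n) F} (hf : ∀ k i, (f k).degreeOf i ≤ 1)
    [Algebra.IsIntegral (Algebra.adjoin F (Set.range f)) (MvPolynomial (Fin n) F)]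
    (c : Fin n → F) (T : Finset (Fin n → F))
    (hT : ∀ d ∈ T, ∀ k, MvPolynomial.eval d (f k) = c k) : T.card ≤ n.factorial := by
  classical
  obtain ⟨θ, hθ⟩ := MvPolynomial.exists_injOn_eval T
  obtain ⟨q, hqm, hqd, hq⟩ := exists_monic_natDegree_le_factorial hf θ
  set r := q.map (MvPolynomial.eval c)
  have hr : r.Monic := hqm.map _
  have hroot (d) (hd : d ∈ T) : MvPolynomial.eval d θ ∈ r.roots.toFinset := by
    have hcomp : (MvPolynomial.eval d).comp (MvPolynomial.aeval f :
        MvPolynomial (Fin n) F →ₐ[F] MvPolynomial (Fin n) F).toRingHom = MvPolynomial.eval c := by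
      ext <;> simp [hT d hd]
    rw [Multiset.mem_toFinset, Polynomial.mem_roots hr.ne_zero, Polynomial.IsRoot,
      Polynomial.eval_map, ← hcomp, ← Polynomial.hom_eval₂, hq, map_zero]
  calc T.card = (T.image fun d => MvPolynomial.eval d θ).card :=
        (Finset.card_image_of_injOn hθ).symm
    _ ≤ r.roots.toFinset.card := Finset.card_le_card (Finset.image_subset_iff.2 hroot)
    _ ≤ r.roots.card := Multiset.toFinset_card_le _
    _ ≤ r.natDegree := Polynomial.card_roots' _
    _ ≤ n.factorial := Polynomial.natDegree_map_le.trans hqd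

lemma exists_forall_eval_eq {F : Type*} [Field F] [IsAlgClosed F] {n : ℕ}
    (f : Fin n → MvPolynomial (Fin n) F)
    [Algebra.IsIntegral (Algebra.adjoin F (Set.range f)) (MvPolynomial (Fin n) F)]
    (c : Fin n → F) : ∃ d, ∀ k, MvPolynomial.eval d (f k) = c k := by
  have hind := algebraicIndependent_of_isIntegral_adjoin f
  set A := Algebra.adjoin F (Set.range f)
  let ev : A →+* F := (MvPolynomial.eval c).comp
    (hind.aevalEquiv.symm : A →+* MvPolynomial (Fin n) F)
  have hev : Function.Surjective ev := fun a => ⟨algebraMap F A a, by simp [ev]⟩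
  have hmax : (RingHom.ker ev).IsMaximal := RingHom.ker_isMaximal_of_surjective ev hev
  obtain ⟨Q, hQ, hQc⟩ := Ideal.exists_ideal_over_maximal_of_isIntegral
    (S := MvPolynomial (Fin n) F) (RingHom.ker ev) (fun a ha => by
      have ha0 : a = 0 := Subtype.val_injective ha
      simp [ha0])
  obtain ⟨d, rfl⟩ := (MvPolynomial.isMaximal_iff_eq_vanishingIdeal_singleton).1 hQ
  refine ⟨d, fun k => ?_⟩
  have hker : hind.aevalEquiv (MvPolynomial.X k - MvPolynomial.C (c k)) ∈ RingHom.ker ev := by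
    simp [ev, RingHom.mem_ker]
  rw [← hQc, Ideal.mem_comap, hind.algebraMap_aevalEquiv] at hker
  simpa [MvPolynomial.mem_vanishingIdeal_singleton_iff, sub_eq_zero,
    MvPolynomial.aeval_eq_eval] using hker

/-- The principal minor of `M` with rows and columns indexed by `S`. -/
def Matrix.principalMinor {ι F : Type*} [CommRing F] [DecidableEq ι] (M : Matrix ι ι F)
    (S : Finset ι) : F :=
  (M.submatrix (Subtype.val : S → ι) Subtype.val).det

lemma Matrix.det_submatrix_orderEmbOfFin_s15 {ι F : Type*} [CommRing F] [LinearOrder ι]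
    (M : Matrix ι ι F) (S : Finset ι) :
    (M.submatrix (S.orderEmbOfFin rfl) (S.orderEmbOfFin rfl)).det = M.principalMinor S := by
  rw [principalMinor, ← Matrix.det_submatrix_equiv_self (S.orderIsoOfFin rfl).toEquiv]
  rfl

lemma Matrix.coeff_charpoly_mul_diagonal {ι F : Type*} [CommRing F] [Fintype ι] [DecidableEq ι]
    (M : Matrix ι ι F) (d : ι → F) (k : ℕ) (hk : k ≤ Fintype.card ι) :
    (M * diagonal d).charpoly.coeff (Fintype.card ι - k) =
      (-1) ^ k * MvPolynomial.eval d (weightedEsymm M.principalMinor k) := by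
  rw [charpoly_coeff_eq_sum_minors _ _ hk, weightedEsymm, map_sum]
  congr 1
  refine Finset.sum_congr rfl fun S _ => ?_
  have : (M * diagonal d).submatrix (Subtype.val : S → ι) (Subtype.val : S → ι) =
      M.submatrix Subtype.val Subtype.val * diagonal fun i : S => d i := by
    ext i j
    simp [mul_diagonal]
  rw [this, det_mul, det_diagonal]
  simp [principalMinor, Finset.prod_attach S d]

lemma Matrix.charpoly_mul_diagonal_eq_iff {F : Type*} [Field F] {n : ℕ}
    (M : Matrix (Fin n) (Fin n) F) (d : Fin n → F) {p : Polynomial F} (hp : p.Monic)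
    (hpn : p.natDegree = n) :
    (M * diagonal d).charpoly = p ↔ ∀ k : Fin n,
      MvPolynomial.eval d (weightedEsymm M.principalMinor (k + 1)) =
        (-1) ^ ((k : ℕ) + 1) * p.coeff (n - (k + 1)) := by
  have hcoeff (k : ℕ) (hk : k ≤ n) := M.coeff_charpoly_mul_diagonal d k (by simpa using hk)
  simp only [Fintype.card_fin] at hcoeff
  have hsq (k : ℕ) (x : F) : (-1) ^ k * ((-1) ^ k * x) = x := by
    rw [← mul_assoc, ← mul_pow]
    simp
  constructor
  · rintro rfl k
    rw [hcoeff _ k.2, hsq]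
  · intro h
    have hm := (M * diagonal d).charpoly_monic
    have hdeg : (M * diagonal d).charpoly.natDegree = n := by
      simp [charpoly_natDegree_eq_dim]
    refine (Polynomial.ext_iff_natDegree_le hdeg.le hpn.le).2 fun i hi => ?_
    rcases hi.eq_or_lt with hin | hlt
    · have h1 := hm.coeff_natDegree
      have h2 := hp.coeff_natDegree
      rw [hdeg] at h1
      rw [hpn] at h2
      rw [hin, h1, h2]
    · obtain ⟨k, rfl, hk⟩ : ∃ k, i = n - (k + 1) ∧ k < n := ⟨n - 1 - i, by omega, by omega⟩
      rw [hcoeff _ hk, h ⟨k, hk⟩, hsq]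

lemma Finset.exists_pos_sum_eq {α : Type*} {s : Finset α} (hs : s.Nonempty) {N : ℕ}
    (hN : s.card ≤ N) : ∃ mult : α → ℕ, (∀ d ∈ s, 0 < mult d) ∧ ∑ d ∈ s, mult d = N := by
  classical
  obtain ⟨a, ha⟩ := hs
  refine ⟨fun d => 1 + if d = a then N - s.card else 0, fun d _ => by positivity, ?_⟩
  simp [Finset.sum_add_distrib, ha, hN]

/-- Let `F` be an algebraically closed field and `M` an `n × n` matrix over `F` all of
whose principal minors are nonzero.  Then for every monic polynomial `p` of degree `n`,
the set of diagonal matrices `Z = diagonal d` with `det (λ I - M Z) = p(λ)` is finite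
with at most `n!` elements; moreover the solutions carry (positive) multiplicities
summing to exactly `n!`. -/
theorem multiplicative_inverse_eigenvalue_diagonal_count {F : Type*} [Field F]
    [IsAlgClosed F] {n : ℕ} (M : Matrix (Fin n) (Fin n) F)
    (hM : ∀ I : Finset (Fin n),
      (M.submatrix (I.orderEmbOfFin rfl) (I.orderEmbOfFin rfl)).det ≠ 0) :
    ∀ p : Polynomial F, p.Monic → p.natDegree = n →
      {d : Fin n → F | (M * Matrix.diagonal d).charpoly = p}.Finite ∧
      {d : Fin n → F | (M * Matrix.diagonal d).charpoly = p}.ncard ≤ Nat.factorial n ∧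
      ∃ (s : Finset (Fin n → F)) (mult : (Fin n → F) → ℕ),
        (↑s = {d : Fin n → F | (M * Matrix.diagonal d).charpoly = p}) ∧
        (∀ d ∈ s, 0 < mult d) ∧
        ∑ d ∈ s, mult d = Nat.factorial n := by
  intro p hp hpn
  have : Infinite F := IsAlgClosed.instInfinite
  have hint := isIntegral_adjoin_weightedEsymm M.principalMinor
    fun S => M.det_submatrix_orderEmbOfFin_s15 S ▸ hM S
  set c : Fin n → F := fun k => (-1) ^ ((k : ℕ) + 1) * p.coeff (n - (k + 1))
  set Z := {d : Fin n → F | (M * Matrix.diagonal d).charpoly = p}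
  have hZ (d) : d ∈ Z ↔ ∀ k : Fin n,
      MvPolynomial.eval d (weightedEsymm M.principalMinor (k + 1)) = c k :=
    M.charpoly_mul_diagonal_eq_iff d hp hpn
  have hcard (T : Finset (Fin n → F)) (hT : ↑T ⊆ Z) : T.card ≤ n.factorial :=
    card_le_factorial_of_eval_eq (fun _ _ => degreeOf_weightedEsymm_le _ _ _) c T
      fun d hd => (hZ d).1 (hT hd)
  have hfin : Z.Finite := by
    by_contra hinf
    obtain ⟨T, hTZ, hT⟩ := Set.Infinite.exists_subset_card_eq hinf (n.factorial + 1)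
    exact absurd (hcard T hTZ) (by omega)
  obtain ⟨d, hd⟩ := exists_forall_eval_eq
    (fun k : Fin n => weightedEsymm M.principalMinor (k + 1)) c
  lift Z to Finset (Fin n → F) using hfin with s
  obtain ⟨mult, hpos, hsum⟩ := Finset.exists_pos_sum_eq ⟨d, (hZ d).2 hd⟩ (hcard s subset_rfl)
  exact ⟨s.finite_toSet, (Set.ncard_coe_finset s).trans_le (hcard s subset_rfl),
    s, mult, rfl, hpos, hsum⟩
end
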